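/- The number of n-element members of the dual complex Δ̄ equals C(2n, n) minus the number of satisfying truth assignments of the CNF formula φ. -/

import Mathlib

/-- For a clause `C` (a finite set of literals `(j,b)`), the circuit
`C' = {(j, ¬b) : (j,b) ∈ C}`. -/
def clauseDual {n : ℕ} (C : Finset (Fin n × Bool)) : Finset (Fin n × Bool) :=
  C.image (fun l => (l.1, !l.2))

/-- The circuit `P i = {t_i, f_i}`. -/
def pairCircuit {n : ℕ} (i : Fin n) : Finset (Fin n × Bool) :=
  {(i, true), (i, false)}

/-- `S` is a face of the complex `Δ` associated with the CNF formula `φ`: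
it contains none of the circuits `C₁', …, C_m', P₁, …, P_n`. -/
def IsFace {n m : ℕ} (φ : Fin m → Finset (Fin n × Bool)) (S : Finset (Fin n × Bool)) : Prop :=
  (∀ k, ¬ clauseDual (φ k) ⊆ S) ∧ (∀ i, ¬ pairCircuit i ⊆ S)

/-- The set `S_a = {(i, a i) : i}` associated with a truth assignment `a`. -/
def assignFace {n : ℕ} (a : Fin n → Bool) : Finset (Fin n × Bool) :=
  Finset.univ.image (fun i => (i, a i))

/-- The assignment `a` satisfies the clause `C`. -/
def SatisfiesClause {n : ℕ} (a : Fin n → Bool) (C : Finset (Fin n × Bool)) : Prop :=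
  ∃ l ∈ C, a l.1 = l.2

/-- The assignment `a` satisfies every clause of the CNF formula `φ`. -/
def Satisfies {n m : ℕ} (φ : Fin m → Finset (Fin n × Bool)) (a : Fin n → Bool) : Prop :=
  ∀ k, SatisfiesClause a (φ k)
/-- `S` belongs to the dual complex `Δ̄` associated with `φ`:
`S` is contained in the complement of some circuit. -/
def InDualCNF {n m : ℕ} (φ : Fin m → Finset (Fin n × Bool))
    (S : Finset (Fin n × Bool)) : Prop :=
  (∃ k, S ⊆ (clauseDual (φ k))ᶜ) ∨ (∃ i, S ⊆ (pairCircuit i)ᶜ)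

theorem mem_assignFace {n : ℕ} (a : Fin n → Bool) (l : Fin n × Bool) :
    l ∈ assignFace a ↔ a l.1 = l.2 := by
  obtain ⟨i, b⟩ := l
  simp [assignFace]

theorem assignFace_injective {n : ℕ} :
    Function.Injective (assignFace : (Fin n → Bool) → Finset (Fin n × Bool)) := by
  intro a b h
  funext i
  have hi : (i, a i) ∈ assignFace b := h ▸ (mem_assignFace a (i, a i)).2 rfl
  exact ((mem_assignFace b _).1 hi).symm

theorem card_assignFace {n : ℕ} (a : Fin n → Bool) : (assignFace a).card = n := by
  rw [assignFace, Finset.card_image_of_injective _ fun i j h => congrArg Prod.fst h]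
  simp

/-- An `n`-element set meeting every pair `{t_i, f_i}` is the graph of an assignment. -/
theorem exists_eq_assignFace {n : ℕ} {S : Finset (Fin n × Bool)} (hcard : S.card = n)
    (hS : ∀ i, ∃ b, (i, b) ∈ S) : ∃ a, S = assignFace a := by
  choose a ha using hS
  refine ⟨a, (Finset.eq_of_subset_of_card_le ?_ ?_).symm⟩
  · rintro ⟨i, b⟩ h
    obtain rfl : a i = b := (mem_assignFace a _).1 h
    exact ha i
  · rw [hcard, card_assignFace]

theorem subset_compl_pairCircuit_iff {n : ℕ} {S : Finset (Fin n × Bool)} {i : Fin n} :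
    S ⊆ (pairCircuit i)ᶜ ↔ ∀ b, (i, b) ∉ S := by
  rw [Finset.subset_compl_comm]
  simp [pairCircuit, Finset.insert_subset_iff, and_comm]

theorem assignFace_not_subset_compl_clauseDual_iff {n : ℕ} {a : Fin n → Bool}
    {C : Finset (Fin n × Bool)} :
    assignFace (fun i => !a i) ⊆ (clauseDual C)ᶜ ↔ ¬ SatisfiesClause a C := by
  rw [Finset.subset_compl_comm, clauseDual]
  simp only [mem_assignFace, SatisfiesClause, Finset.subset_iff, Finset.mem_compl,
    Finset.forall_mem_image, Bool.not_inj_iff, not_exists, not_and]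

theorem inDualCNF_assignFace_not_iff {n m : ℕ} {φ : Fin m → Finset (Fin n × Bool)}
    {a : Fin n → Bool} :
    InDualCNF φ (assignFace fun i => !a i) ↔ ¬ Satisfies φ a := by
  simp [InDualCNF, assignFace_not_subset_compl_clauseDual_iff, subset_compl_pairCircuit_iff,
    mem_assignFace, Satisfies]

/-- The `n`-element sets outside the dual complex are the graphs of the negations of the
satisfying assignments. -/
theorem not_inDualCNF_and_card_iff {n m : ℕ} {φ : Fin m → Finset (Fin n × Bool)}
    {S : Finset (Fin n × Bool)} :
    (S.card = n ∧ ¬ InDualCNF φ S) ↔ ∃ a, Satisfies φ a ∧ assignFace (fun i => !a i) = S := by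
  constructor
  · rintro ⟨hcard, hS⟩
    have hpair : ∀ i, ∃ b, (i, b) ∈ S := by
      intro i
      by_contra! h
      exact hS (Or.inr ⟨i, subset_compl_pairCircuit_iff.2 h⟩)
    obtain ⟨a, rfl⟩ := exists_eq_assignFace hcard hpair
    refine ⟨fun i => !a i, ?_, by simp⟩
    by_contra h
    exact hS (by simpa using inDualCNF_assignFace_not_iff.2 h)
  · rintro ⟨a, ha, rfl⟩
    exact ⟨card_assignFace _, fun h => inDualCNF_assignFace_not_iff.1 h ha⟩

theorem card_dual_eq_choose_sub_satisfying {n m : ℕ} (φ : Fin m → Finset (Fin n × Bool)) :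
    Nat.card {S : Finset (Fin n × Bool) // InDualCNF φ S ∧ S.card = n} =
      (2 * n).choose n - Nat.card {a : Fin n → Bool // Satisfies φ a} := by
  classical
  have hsets : (Finset.powersetCard n (Finset.univ : Finset (Fin n × Bool))).card =
      (2 * n).choose n := by
    simp [Finset.card_powersetCard, mul_comm]
  have hinj : Function.Injective fun a : Fin n → Bool => assignFace fun i => !a i := by
    intro a b h
    funext i
    simpa using congrFun (assignFace_injective h) i
  have hcompl : (Finset.powersetCard n (Finset.univ : Finset (Fin n × Bool))).filter
      (fun S => ¬ InDualCNF φ S) =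
      (Finset.univ.filter (Satisfies φ)).image fun a => assignFace fun i => !a i := by
    ext S
    simpa [Finset.mem_powersetCard] using not_inDualCNF_and_card_iff
  have hsum := Finset.card_filter_add_card_filter_not
    (s := Finset.powersetCard n (Finset.univ : Finset (Fin n × Bool))) (InDualCNF φ)
  rw [hcompl, Finset.card_image_of_injective _ hinj, hsets] at hsum
  rw [Nat.subtype_card ((Finset.powersetCard n Finset.univ).filter (InDualCNF φ))
      (by simp [Finset.mem_powersetCard, and_comm]),
    Nat.subtype_card (Finset.univ.filter (Satisfies φ)) (by simp)]
  omega
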